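/- Let F be a social choice function on n voters and 3 alternatives. Then for every pair of alternatives a,b: M^{a,b}(F) ≤ 6 · Σ_{i=1}^n M_i(F), where M_i(F) is the manipulation power of voter i (the probability that a uniformly random x'_i is a profitable manipulation of F by voter i at a uniformly random profile x). -/

import Mathlib

open Finset
open scoped Classical

/-- A linear order on the three alternatives `{0,1,2}`, represented by its ranking
permutation: `σ a` is the rank of alternative `a` (rank `0` is most preferred). -/
abbrev Order3 := Equiv.Perm (Fin 3)

/-- A profile of `n` voters on three alternatives. -/
abbrev Profile (n : ℕ) := Fin n → Order3

/-- Voter with ranking `σ` prefers alternative `a` over alternative `b`. -/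
def Prefers (σ : Order3) (a b : Fin 3) : Prop := σ a < σ b

/-- The column `x^{a,b} ∈ {0,1}ⁿ` of individual preferences between `a` and `b`. -/
noncomputable def col (n : ℕ) (x : Profile n) (a b : Fin 3) : Fin n → Bool :=
  fun i => decide (Prefers (x i) a b)

/-- `M^{a,b}(F)`: the probability that `F x = a` and `F x' = b`, where `x, x'` are uniform
on profiles conditioned on agreeing in all individual preferences between `a` and `b`. -/
noncomputable def Mab (n : ℕ) (F : Profile n → Fin 3) (a b : Fin 3) : ℝ :=
  ((univ.filter (fun p : Profile n × Profile n =>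
      col n p.1 a b = col n p.2 a b ∧ F p.1 = a ∧ F p.2 = b)).card : ℝ) /
  ((univ.filter (fun p : Profile n × Profile n =>
      col n p.1 a b = col n p.2 a b)).card : ℝ)

/-- The manipulation power `M_i(F)`: the probability over a uniform profile `x` and a uniform
ballot `x'_i` that `x'_i` is a profitable manipulation for voter `i` at `x`. -/
noncomputable def Mi (n : ℕ) (F : Profile n → Fin 3) (i : Fin n) : ℝ :=
  ((univ.filter (fun p : Profile n × Order3 =>
      Prefers (p.1 i) (F (Function.update p.1 i p.2)) (F p.1))).card : ℝ) /
  (Fintype.card (Profile n × Order3) : ℝ)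


lemma iso_base (a b : Fin 3 → ℝ) (ha : ∀ j, 0 ≤ a j ∧ a j ≤ 1) (hb : ∀ j, 0 ≤ b j ∧ b j ≤ 1) :
    (∑ j, a j) * (∑ j, b j) ≤ 3 * (∑ j, a j * b j +
      ∑ j, ∑ k, if j < k then max (a j - a k) 0 + max (b j - b k) 0 else 0) := by
  have key : ∀ j k, 0 ≤ (a j - a k) * (b j - b k) + (max (a j - a k) 0 + max (b j - b k) 0) := by
    intro j k
    obtain ⟨h1, h2⟩ := ha j
    obtain ⟨h3, h4⟩ := ha k
    obtain ⟨h5, h6⟩ := hb j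
    obtain ⟨h7, h8⟩ := hb k
    rcases le_total (a j) (a k) with h | h <;> rcases le_total (b j) (b k) with h' | h'
    · rw [max_eq_right (by linarith), max_eq_right (by linarith)]; nlinarith
    · rw [max_eq_right (by linarith), max_eq_left (by linarith)]; nlinarith
    · rw [max_eq_left (by linarith), max_eq_right (by linarith)]; nlinarith
    · rw [max_eq_left (by linarith), max_eq_left (by linarith)]; nlinarith
  have pos : ∀ j k, 0 ≤ (max (a j - a k) 0 + max (b j - b k) 0) := fun j k => by positivity
  have k1 := key 0 1
  have k2 := key 0 2
  have k3 := key 1 2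
  have p1 := pos 0 1
  have p2 := pos 0 2
  have p3 := pos 1 2
  simp [Fin.sum_univ_three]
  nlinarith

lemma iso (n : ℕ) : ∀ (f g : (Fin n → Fin 3) → ℝ) (_ : ∀ x, 0 ≤ f x ∧ f x ≤ 1)
    (_ : ∀ x, 0 ≤ g x ∧ g x ≤ 1),
    (∑ x, f x) * (∑ x, g x) ≤ 3 ^ n * (∑ x, f x * g x +
      ∑ x, ∑ i, ∑ k, if x i < k then max (f x - f (Function.update x i k)) 0 +
        max (g x - g (Function.update x i k)) 0 else 0) := by
  induction n with
  | zero =>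
    intro f g hf hg
    simp
  | succ n ih =>
    intro f g hf hg
    have hs : ∀ h : (Fin (n+1) → Fin 3) → ℝ, ∑ x, h x = ∑ j, ∑ t, h (Fin.cons j t) := by
      intro h
      rw [← Fintype.sum_prod_type']
      exact (Equiv.sum_comp (Fin.consEquiv (fun _ => Fin 3)) h).symm
    simp only [hs, Fin.sum_univ_succ (n := n), Fin.cons_zero, Fin.cons_succ, Fin.update_cons_zero,
      ← Fin.cons_update, Finset.sum_add_distrib]
    set N : ℝ := 3 ^ n with hN
    have hNp : 0 < N := by positivity
    have hcard : ((univ : Finset (Fin n → Fin 3)).card : ℝ) = N := by simp [hN]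
    have bd : ∀ h : (Fin (n+1) → Fin 3) → ℝ, (∀ x, 0 ≤ h x ∧ h x ≤ 1) → ∀ j,
        0 ≤ (∑ t, h (Fin.cons j t)) / N ∧ (∑ t, h (Fin.cons j t)) / N ≤ 1 := by
      intro h hh j
      refine ⟨div_nonneg (sum_nonneg fun t _ => (hh _).1) hNp.le, ?_⟩
      rw [div_le_one hNp, ← hcard]
      calc _ ≤ ∑ t : Fin n → Fin 3, (1:ℝ) := sum_le_sum fun t _ => (hh _).2
        _ = _ := by simp
    have base := iso_base _ _ (bd f hf) (bd g hg)
    have ihj := fun j => ih (fun t => f (Fin.cons j t)) (fun t => g (Fin.cons j t))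
      (fun _ => hf _) (fun _ => hg _)
    have ihs := Finset.sum_le_sum (fun j (_ : j ∈ (univ : Finset (Fin 3))) => ihj j)
    simp only [← Finset.mul_sum, Finset.sum_add_distrib] at ihs
    have mx : ∀ (h : (Fin (n+1) → Fin 3) → ℝ) (j k), N * max ((∑ t, h (Fin.cons j t)) / N -
        (∑ t, h (Fin.cons k t)) / N) 0 ≤ ∑ t, max (h (Fin.cons j t) - h (Fin.cons k t)) 0 := by
      intro h j k
      rw [← sub_div, mul_max_of_nonneg _ _ hNp.le, mul_div_cancel₀ _ hNp.ne', mul_zero,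
        ← Finset.sum_sub_distrib]
      exact max_le (sum_le_sum fun t _ => le_max_left _ _)
        (sum_nonneg fun t _ => le_max_right _ _)
    have dir : N * ∑ j : Fin 3, ∑ k : Fin 3, (if j < k then max ((∑ t, f (Fin.cons j t)) / N -
        (∑ t, f (Fin.cons k t)) / N) 0 + max ((∑ t, g (Fin.cons j t)) / N -
        (∑ t, g (Fin.cons k t)) / N) 0 else 0) ≤ ∑ j : Fin 3, ∑ t : Fin n → Fin 3, ∑ k : Fin 3,
        if j < k then max (f (Fin.cons j t) - f (Fin.cons k t)) 0 +
          max (g (Fin.cons j t) - g (Fin.cons k t)) 0 else 0 := by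
      rw [Finset.mul_sum]
      refine sum_le_sum fun j _ => ?_
      rw [Finset.mul_sum, Finset.sum_comm]
      refine sum_le_sum fun k _ => ?_
      split_ifs
      · rw [mul_add, sum_add_distrib]
        exact add_le_add (mx f j k) (mx g j k)
      · simp
    simp only [← Finset.sum_div, div_mul_div_comm] at base
    rw [div_le_iff₀ (by positivity)] at base
    have e1 : ∀ D : ℝ, 3 * ((∑ i, (∑ t, f (Fin.cons i t)) * ∑ t, g (Fin.cons i t)) / (N * N) + D)
        * (N * N) = 3 * (∑ i, (∑ t, f (Fin.cons i t)) * ∑ t, g (Fin.cons i t)) + 3 * N * (N * D) := by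
      intro D; field_simp
    rw [e1] at base
    refine base.trans ?_
    rw [pow_succ, ← hN]
    have := mul_le_mul_of_nonneg_left dir (by positivity : 0 ≤ 3 * N)
    linarith

lemma enc_bij : ∀ a b c : Fin 3, a ≠ b → c ≠ a → c ≠ b →
    Function.Bijective (fun σ : Equiv.Perm (Fin 3) => (decide (σ a < σ b), σ c)) := by
  decide

lemma manip : ∀ a b c : Fin 3, a ≠ b → c ≠ a → c ≠ b → ∀ σ τ : Equiv.Perm (Fin 3),
    decide (σ a < σ b) = decide (τ a < τ b) → σ c < τ c → ∀ u v : Fin 3,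
    ((u = a ∧ v ≠ a) ∨ (u = b ∧ v ≠ b)) → σ v < σ u ∨ τ u < τ v := by
  decide

lemma exists_third : ∀ a b : Fin 3, ∃ c, c ≠ a ∧ c ≠ b := by decide

lemma invol {n : ℕ} (i : Fin n) (h : (Fin n → Fin 3) → Fin 3 → ℝ) :
    ∑ t, ∑ k, h (Function.update t i k) (t i) = ∑ t, ∑ k, h t k := by
  rw [← Fintype.sum_prod_type', ← Fintype.sum_prod_type']
  refine Finset.sum_nbij' (fun p => (Function.update p.1 i p.2, p.1 i))
    (fun p => (Function.update p.1 i p.2, p.1 i)) ?_ ?_ ?_ ?_ ?_ <;> simp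

/-- Each upward edge contributes at most one profitable manipulation in some direction. -/
lemma pairing {n : ℕ} (i : Fin n) (h : (Fin n → Fin 3) → Fin 3 → ℝ) (h0 : ∀ t k, 0 ≤ h t k) :
    ∑ t, ∑ k, (if t i < k then h t k + h (Function.update t i k) (t i) else 0) ≤
      ∑ t, ∑ k, h t k := by
  have e : ∑ t : Fin n → Fin 3, ∑ k, (if t i < k then h (Function.update t i k) (t i) else 0) =
      ∑ t : Fin n → Fin 3, ∑ k, if k < t i then h t k else 0 := by
    rw [← invol i (fun t k => if k < t i then h t k else 0)]
    simp
  have s : ∑ t : Fin n → Fin 3, ∑ k, (if t i < k then h t k + h (Function.update t i k) (t i) else 0)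
      = ∑ t : Fin n → Fin 3, ∑ k, (if t i < k then h t k else 0) +
        ∑ t : Fin n → Fin 3, ∑ k, (if t i < k then h (Function.update t i k) (t i) else 0) := by
    simp only [← Finset.sum_add_distrib]
    refine sum_congr rfl fun t _ => sum_congr rfl fun k _ => ?_
    split_ifs <;> simp
  rw [s, e]
  simp only [← Finset.sum_add_distrib]
  refine sum_le_sum fun t _ => sum_le_sum fun k _ => ?_
  have := h0 t k
  split_ifs with h1 h2
  · exact absurd h2 h1.le.not_gt
  all_goals linarith


set_option maxHeartbeats 1000000 in
/-- For any SCF on three alternatives and any pair of alternatives,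
`M^{a,b}(F) ≤ 6 · Σᵢ Mᵢ(F)`. -/
theorem stmt7 (n : ℕ) (F : Profile n → Fin 3) (a b : Fin 3) (hab : a ≠ b) :
    Mab n F a b ≤ 6 * ∑ i : Fin n, Mi n F i := by
  obtain ⟨c, hca, hcb⟩ := exists_third a b
  let e : Order3 ≃ Bool × Fin 3 := Equiv.ofBijective _ (enc_bij a b c hab hca hcb)
  have e1 : ∀ z k, decide (e.symm (z, k) a < e.symm (z, k) b) = z := fun z k =>
    congrArg Prod.fst (e.apply_symm_apply (z, k))
  have e2 : ∀ z k, e.symm (z, k) c = k := fun z k =>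
    congrArg Prod.snd (e.apply_symm_apply (z, k))
  let P : (Fin n → Bool) → (Fin n → Fin 3) → Profile n := fun z t i => e.symm (z i, t i)
  have hs : ∀ h : Profile n → ℝ, ∑ x, h x = ∑ z, ∑ t, h (P z t) := by
    intro h
    rw [← Fintype.sum_prod_type' (f := fun z t => h (P z t))]
    refine (Finset.sum_nbij' (fun p => P p.1 p.2)
      (fun x => (fun i => (e (x i)).1, fun i => (e (x i)).2)) ?_ ?_ ?_ ?_ ?_).symm <;>
      simp [P]
  have hcol : ∀ z t, col n (P z t) a b = z := by
    intro z t
    funext i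
    have := e1 (z i) (t i)
    simp only [col, Prefers, P]
    refine Eq.trans ?_ this
    congr
  have hupd : ∀ z t i k, Function.update (P z t) i (e.symm (z i, k)) =
      P z (Function.update t i k) := by
    intro z t i k
    funext j
    by_cases hj : j = i
    · subst hj; simp [P]
    · simp [P, hj]
  have hpair : ∀ f g : Profile n → ℝ,
      ∑ p : Profile n × Profile n, (if col n p.1 a b = col n p.2 a b then f p.1 * g p.2 else 0) =
      ∑ z, (∑ t, f (P z t)) * (∑ t, g (P z t)) := by
    intro f g
    rw [Fintype.sum_prod_type]
    simp only [hs, hcol]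
    refine sum_congr rfl fun z _ => ?_
    rw [Finset.sum_mul]
    refine sum_congr rfl fun t _ => ?_
    rw [Finset.mul_sum, Finset.sum_eq_single z]
    · simp
    · intro z' _ hz
      simp [hz.symm]
    · simp
  let fa : Profile n → ℝ := fun x => if F x = a then 1 else 0
  let fb : Profile n → ℝ := fun x => if F x = b then 1 else 0
  have hnum : ((univ.filter (fun p : Profile n × Profile n =>
      col n p.1 a b = col n p.2 a b ∧ F p.1 = a ∧ F p.2 = b)).card : ℝ) =
      ∑ z, (∑ t, fa (P z t)) * (∑ t, fb (P z t)) := by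
    rw [← hpair, Finset.card_filter]
    push_cast
    refine sum_congr rfl fun p _ => ?_
    by_cases h1 : col n p.1 a b = col n p.2 a b <;> by_cases h2 : F p.1 = a <;>
      by_cases h3 : F p.2 = b <;> simp [h1, h2, h3, fa, fb]
  have hden : ((univ.filter (fun p : Profile n × Profile n =>
      col n p.1 a b = col n p.2 a b)).card : ℝ) = 3 ^ n * 6 ^ n := by
    have := hpair (fun _ => 1) (fun _ => 1)
    rw [Finset.card_filter]
    push_cast
    simp only [mul_one] at this
    rw [this]
    simp
    rw [← mul_pow, ← mul_pow, ← mul_pow]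
    norm_num
  let m : Fin n → Profile n → Order3 → ℝ := fun i x σ =>
    if Prefers (x i) (F (Function.update x i σ)) (F x) then 1 else 0
  have hm0 : ∀ i x σ, 0 ≤ m i x σ := by
    intro i x σ; simp only [m]; split_ifs <;> norm_num
  have hMi : ∀ i, Mi n F i = (∑ x, ∑ σ, m i x σ) / (6 ^ n * 6) := by
    intro i
    rw [Mi, Finset.card_filter, ← Fintype.sum_prod_type']
    push_cast
    congr 1
    simp [Fintype.card_perm, Nat.factorial]
  have hlow : ∀ i, ∑ z, ∑ t, ∑ k, m i (P z t) (e.symm (z i, k)) ≤ ∑ x, ∑ σ, m i x σ := by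
    intro i
    rw [hs]
    refine sum_le_sum fun z _ => sum_le_sum fun t _ => ?_
    rw [← Equiv.sum_comp e.symm, Fintype.sum_prod_type]
    exact Finset.single_le_sum (f := fun y => ∑ k, m i (P z t) (e.symm (y, k)))
      (fun y _ => sum_nonneg fun k _ => hm0 _ _ _) (mem_univ (z i))
  have hedge : ∀ z t i k, t i < k →
      max (fa (P z t) - fa (P z (Function.update t i k))) 0 +
      max (fb (P z t) - fb (P z (Function.update t i k))) 0 ≤
      m i (P z t) (e.symm (z i, k)) +
        m i (P z (Function.update t i k)) (e.symm (z i, t i)) := by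
    intro z t i k hk
    have hM := manip a b c hab hca hcb (e.symm (z i, t i)) (e.symm (z i, k))
      (by rw [e1, e1]) (by rw [e2, e2]; exact hk) (F (P z t)) (F (P z (Function.update t i k)))
    have r1 : P z t i = e.symm (z i, t i) := rfl
    have r2 : P z (Function.update t i k) i = e.symm (z i, k) := by simp [P]
    have n1 := hm0 i (P z t) (e.symm (z i, k))
    have n2 := hm0 i (P z (Function.update t i k)) (e.symm (z i, t i))
    by_cases hc : ((F (P z t) = a ∧ F (P z (Function.update t i k)) ≠ a) ∨
        (F (P z t) = b ∧ F (P z (Function.update t i k)) ≠ b))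
    · have hL : max (fa (P z t) - fa (P z (Function.update t i k))) 0 +
          max (fb (P z t) - fb (P z (Function.update t i k))) 0 ≤ 1 := by
        by_cases h1 : F (P z t) = a
        · have h2 : F (P z t) ≠ b := by rw [h1]; exact hab
          simp only [fa, fb, h1, if_neg hab]
          split_ifs <;> norm_num
        · simp only [fa, fb, h1]
          split_ifs <;> first | contradiction | norm_num
      refine hL.trans ?_
      rcases hM hc with h | h
      · have : m i (P z t) (e.symm (z i, k)) = 1 := by
          simp only [m, hupd, r1, Prefers]
          exact if_pos h
        linarith
      · have : m i (P z (Function.update t i k)) (e.symm (z i, t i)) = 1 := by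
          simp only [m, hupd, r2, Prefers]
          simp only [Function.update_idem, Function.update_eq_self]
          exact if_pos h
        linarith
    · have hL : max (fa (P z t) - fa (P z (Function.update t i k))) 0 +
          max (fb (P z t) - fb (P z (Function.update t i k))) 0 ≤ 0 := by
        push Not at hc
        obtain ⟨h1, h2⟩ := hc
        have q1 : fa (P z t) - fa (P z (Function.update t i k)) ≤ 0 := by
          simp only [fa]
          split_ifs <;> first | exact absurd (h1 (by assumption)) (by assumption) | norm_num
        have q2 : fb (P z t) - fb (P z (Function.update t i k)) ≤ 0 := by
          simp only [fb]
          split_ifs <;> first | exact absurd (h2 (by assumption)) (by assumption) | norm_num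
        rw [max_eq_right q1, max_eq_right q2]; norm_num
      linarith
  have hz : ∀ z, (∑ t, fa (P z t)) * (∑ t, fb (P z t)) ≤
      3 ^ n * ∑ i, ∑ t, ∑ k, m i (P z t) (e.symm (z i, k)) := by
    intro z
    refine (iso n (fun t => fa (P z t)) (fun t => fb (P z t)) ?_ ?_).trans ?_
    · intro t; simp only [fa]; split_ifs <;> norm_num
    · intro t; simp only [fb]; split_ifs <;> norm_num
    refine mul_le_mul_of_nonneg_left ?_ (by positivity)
    have h0 : ∑ t, fa (P z t) * fb (P z t) = 0 := by
      refine sum_eq_zero fun t _ => ?_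
      by_cases h1 : F (P z t) = a
      · simp [fa, fb, h1, hab]
      · simp [fa, h1]
    rw [h0, zero_add, Finset.sum_comm]
    refine sum_le_sum fun i _ => ?_
    refine le_trans (sum_le_sum fun t _ => sum_le_sum fun k _ => ?_)
      (pairing i (fun t k => m i (P z t) (e.symm (z i, k))) (fun t k => hm0 _ _ _))
    split_ifs with hk
    · exact hedge z t i k hk
    · exact le_rfl
  have total : ∑ z, (∑ t, fa (P z t)) * (∑ t, fb (P z t)) ≤
      3 ^ n * ∑ i, ∑ x, ∑ σ, m i x σ := by
    refine (sum_le_sum fun z _ => hz z).trans ?_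
    rw [← Finset.mul_sum, Finset.sum_comm]
    exact mul_le_mul_of_nonneg_left (sum_le_sum fun i _ => hlow i) (by positivity)
  rw [Mab, hnum, hden]
  simp only [hMi, ← Finset.sum_div]
  rw [div_le_iff₀ (by positivity)]
  refine total.trans (le_of_eq ?_)
  field_simp
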